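/- Let d_R, d_f, d_P, d_B be positive integers with d_R·d_f = d_P·d_B, and let H_b = H_R = ℂ^{d_R}, H_f = ℂ^{d_f}, H_P = ℂ^{d_P}, H_B = ℂ^{d_B}. Fix unit vectors ψ_f ∈ H_f and e_P ∈ H_P, a unit vector ψ ∈ H_b ⊗ H_R, and a unitary W_b on H_b. For a unitary U : H_b ⊗ H_f → H_P ⊗ H_B define the linear map Ṽ_U : H_b → H_B by Ṽ_U(v) = √(d_P) · (⟨e_P| ⊗ I_B) U (v ⊗ ψ_f). Then, with μ the Haar probability measure on the unitary group of dimension d_P·d_B: ∫ ‖ Tr_B[ (Ṽ_U ⊗ I_R)(W_b ⊗ I_R) ψψ† (W_b† ⊗ I_R)(Ṽ_U† ⊗ I_R) ] − Tr_B[ (Ṽ_U ⊗ I_R) ψψ† (Ṽ_U† ⊗ I_R) ] ‖₂² dμ(U) ≤ 4/d_B. -/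

import Mathlib

open scoped BigOperators Kronecker
open MeasureTheory

/-- The rank-one operator `|v⟩⟨v|` of a vector. -/
noncomputable def outer {n : Type*} (v : n → ℂ) : Matrix n n ℂ :=
  fun i j => v i * (starRingEnd ℂ) (v j)

/-- Partial trace over the first (left) tensor factor:
`(Tr_B ρ)_{i,j} = ∑ₖ ρ_{(k,i),(k,j)}`. -/
noncomputable def ptraceLeft {a b : Type*} [Fintype a]
    (ρ : Matrix (a × b) (a × b) ℂ) : Matrix b b ℂ :=
  fun i j => ∑ k, ρ (k, i) (k, j)

/-- Squared Frobenius (Schatten-2) norm `‖M‖₂² = Tr(M†M) = ∑ |M_{ij}|²`. -/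
noncomputable def frobSq {n : Type*} [Fintype n] (M : Matrix n n ℂ) : ℝ :=
  ∑ i, ∑ j, ‖M i j‖ ^ 2

/-- The post-measurement encoding map `Ṽ_U : H_b → H_B`,
`Ṽ_U(v) = √(d_P) (⟨e_P| ⊗ I_B) U (v ⊗ ψ_f)`, written as a `d_B × d_R` matrix;
`e : Fin dR × Fin df ≃ Fin dP × Fin dB` identifies `H_b ⊗ H_f` with `H_P ⊗ H_B`. -/
noncomputable def Vtilde (dR df dP dB : ℕ)
    (e : Fin dR × Fin df ≃ Fin dP × Fin dB)
    (ψf : Fin df → ℂ) (eP : Fin dP → ℂ)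
    (U : Matrix (Fin dP × Fin dB) (Fin dP × Fin dB) ℂ) :
    Matrix (Fin dB) (Fin dR) ℂ :=
  fun k r => (Real.sqrt dP : ℂ) * ∑ p, (starRingEnd ℂ) (eP p) *
    ∑ y : Fin dP × Fin dB,
      U (p, k) y * (if (e.symm y).1 = r then ψf (e.symm y).2 else 0)

/-!
Write `X = U τ U†`. After subtracting the reduced state of `ψ`, each of the two reduced states in
the integrand is, up to transposition, `A† U† M U A`, where `A A† = τ` and
`M = d_P |e_P⟩⟨e_P| ⊗ I - I` is Hermitian of trace zero. Its squared Frobenius norm is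
`Tr (M X M X)`, and since `M` may be rotated to a diagonal matrix only the second moments
`E |X_kl|²` matter. Left invariance reduces these to `E X_kk²`, `E |X_kl|²` and `E X_kk X_ll` for
one pair `k ≠ l`. The rotations taking `e_k` to `(e_k + w e_l)/√2` with `w ∈ {±1, ±i}` show that the
first is the sum of the other two, so that `E Tr (M X M X) = Tr M² · E X_kk X_ll`. Finally
`E X_kk X_ll ≤ (Tr τ / N)²`, because the `N` entries `X_ll` sum to `Tr τ` and have nonnegative
variance.
-/

section HaarConjugation

local notation "Ad" => Unitary.conjStarAlgAut ℂ (Matrix _ _ ℂ)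

theorem integrable_of_continuous {X : Type*} [TopologicalSpace X] [CompactSpace X]
    [MeasurableSpace X] [OpensMeasurableSpace X] (μ : Measure X) [IsFiniteMeasure μ] {f : X → ℝ}
    (hf : Continuous f) : Integrable f μ :=
  hf.integrable_of_hasCompactSupport (.of_compactSpace f)

theorem sq_integral_le_integral_sq {Ω : Type*} [MeasurableSpace Ω] (P : Measure Ω)
    [IsProbabilityMeasure P] {f : Ω → ℝ} (hf : MemLp f 2 P) :
    (∫ ω, f ω ∂P) ^ 2 ≤ ∫ ω, f ω ^ 2 ∂P := by
  have h := ProbabilityTheory.variance_eq_sub hf ▸ ProbabilityTheory.variance_nonneg f P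
  exact sub_nonneg.mp h

variable {n : Type*} [Fintype n]

theorem exists_unit_vector_re_quadraticForm_eq {k l : n} (hkl : k ≠ l) {w : ℂ} (hw : ‖w‖ = 1) :
    ∃ x : n → ℂ, ∑ i, ‖x i‖ ^ 2 = 1 ∧ ∀ X : Matrix n n ℂ, X.IsHermitian →
      (star x ⬝ᵥ X.mulVec x).re = ((X k k).re + (X l l).re) / 2 + (w * X k l).re := by
  classical
  refine ⟨((√2 : ℝ) : ℂ)⁻¹ • (Pi.single k 1 + Pi.single l w), ?_, fun X hX => ?_⟩
  · have hl : l ∈ Finset.univ.erase k := by simp [hkl.symm]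
    rw [← Finset.add_sum_erase _ _ (Finset.mem_univ k), ← Finset.add_sum_erase _ _ hl,
      Finset.sum_eq_zero fun i hi => ?_]
    · simp only [Pi.smul_apply, Pi.add_apply, Pi.single_eq_same, ne_eq, hkl, hkl.symm,
        not_false_eq_true, Pi.single_eq_of_ne, add_zero, zero_add, smul_eq_mul, mul_one,
        Complex.norm_mul, norm_inv, Complex.norm_real, Real.norm_eq_abs, inv_pow, sq_abs,
        Nat.ofNat_nonneg, Real.sq_sqrt, hw]
      norm_num
    · obtain ⟨hil, hik⟩ : i ≠ l ∧ i ≠ k := by simpa using hi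
      simp [hik, hil]
  · have hform : star (Pi.single k 1 + Pi.single l w : n → ℂ) ⬝ᵥ
        X.mulVec (Pi.single k 1 + Pi.single l w) =
          X k k + ‖w‖ ^ 2 * X l l + (w * X k l + star (w * X k l)) := by
      simp only [star_add, Pi.star_single, star_one, RCLike.star_def, Matrix.mulVec_add,
        Matrix.mulVec_single, MulOpposite.op_one, one_smul, op_smul_eq_smul, dotProduct_add,
        add_dotProduct, single_dotProduct, Matrix.col_apply, one_mul, ← hX.apply l k,
        dotProduct_smul, smul_eq_mul, ← Complex.mul_conj', star_mul']
      ring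
    have hhalf : star ((√2 : ℝ) : ℂ)⁻¹ * ((√2 : ℝ) : ℂ)⁻¹ = ((1 / 2 : ℝ) : ℂ) := by
      rw [RCLike.star_def, map_inv₀, Complex.conj_ofReal, ← Complex.ofReal_inv,
        ← Complex.ofReal_mul, ← mul_inv, Real.mul_self_sqrt (by norm_num), one_div]
    rw [star_smul, Matrix.mulVec_smul, smul_dotProduct, dotProduct_smul, smul_smul, hform, hhalf,
      smul_eq_mul, Complex.re_ofReal_mul, hw]
    simp only [Complex.ofReal_one, one_pow, one_mul, Complex.add_re, RCLike.star_def,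
      Complex.conj_re]
    ring

variable [DecidableEq n]

instance compactSpace_unitaryGroup : CompactSpace (Matrix.unitaryGroup n ℂ) := by
  have hbox : IsCompact (Set.univ.pi fun _ => Set.univ.pi fun _ => Metric.closedBall 0 1 :
      Set (n → n → ℂ)) :=
    isCompact_univ_pi fun _ => isCompact_univ_pi fun _ => isCompact_closedBall 0 1
  refine isCompact_iff_compactSpace.mp (hbox.of_isClosed_subset
    (isClosed_unitary (R := Matrix n n ℂ)) fun U hU i _ j _ => ?_)
  simpa using entry_norm_bound_of_unitary hU i j

theorem exists_unitaryGroup_col_eq (x : n → ℂ) (hx : ∑ i, ‖x i‖ ^ 2 = 1) (k : n) :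
    ∃ Z : Matrix.unitaryGroup n ℂ, (Z : Matrix n n ℂ).col k = x := by
  have hx_orthonormal :
      Orthonormal ℂ (Set.domRestrict {k} fun _ : n => WithLp.toLp 2 x) := by
    refine ⟨fun i => ?_, fun a b hab => (hab (Subsingleton.elim _ _)).elim⟩
    simp [EuclideanSpace.norm_eq, Set.domRestrict, hx]
  obtain ⟨b, hb⟩ := hx_orthonormal.exists_orthonormalBasis_extension_of_card_eq (by simp)
  refine ⟨⟨_, (EuclideanSpace.basisFun n ℂ).toMatrix_orthonormalBasis_mem_unitary b⟩, ?_⟩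
  ext i
  simp [Module.Basis.toMatrix_apply, hb k rfl]

theorem permMatrix_mem_unitaryGroup (σ : Equiv.Perm n) :
    σ.permMatrix ℂ ∈ Matrix.unitaryGroup n ℂ := by
  rw [Matrix.mem_unitaryGroup_iff, Matrix.star_eq_conjTranspose, Matrix.conjTranspose_permMatrix,
    ← Matrix.permMatrix_mul, inv_mul_cancel, Matrix.permMatrix_one]

theorem conjStarAlgAut_permMatrix (σ : Equiv.Perm n) (X : Matrix n n ℂ) :
    Ad ⟨_, permMatrix_mem_unitaryGroup σ⟩ X = X.submatrix σ σ := by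
  rw [Unitary.conjStarAlgAut_apply, Matrix.star_eq_conjTranspose,
    Matrix.conjTranspose_permMatrix]
  simp only [Equiv.Perm.permMatrix, PEquiv.toMatrix_toPEquiv_mul, PEquiv.mul_toMatrix_toPEquiv]
  rfl

theorem trace_conjStarAlgAut (U : Matrix.unitaryGroup n ℂ) (τ : Matrix n n ℂ) :
    (Ad U τ).trace = τ.trace := by
  rw [Unitary.conjStarAlgAut_apply, Matrix.trace_mul_cycle, Unitary.coe_star_mul_self, one_mul]

theorem isHermitian_conjStarAlgAut {τ : Matrix n n ℂ} (hτ : τ.IsHermitian)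
    (U : Matrix.unitaryGroup n ℂ) : (Ad U τ).IsHermitian :=
  Matrix.isHermitian_mul_mul_conjTranspose _ hτ

@[fun_prop]
theorem continuous_conjStarAlgAut_apply (τ : Matrix n n ℂ) (k l : n) :
    Continuous fun U : Matrix.unitaryGroup n ℂ => Ad U τ k l := by
  have h : Continuous fun U : Matrix.unitaryGroup n ℂ => Ad U τ := by
    simp only [Unitary.conjStarAlgAut_apply]
    fun_prop
  exact h.matrix_elem k l

theorem re_trace_diagonal_mul_mul_diagonal_mul (w : n → ℝ) {X : Matrix n n ℂ}
    (hX : X.IsHermitian) :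
    (Matrix.trace (Matrix.diagonal (RCLike.ofReal ∘ w) * X *
      (Matrix.diagonal (RCLike.ofReal ∘ w) * X))).re = ∑ k, ∑ l, w k * w l * ‖X k l‖ ^ 2 := by
  simp only [Matrix.trace, Matrix.diag_apply, Matrix.mul_apply (M := _ * X), Matrix.diagonal_mul,
    Complex.re_sum]
  refine Finset.sum_congr rfl fun k _ => Finset.sum_congr rfl fun l _ => ?_
  rw [mul_mul_mul_comm, ← hX.apply l k, RCLike.star_def, Complex.mul_conj']
  simp only [Function.comp_apply, RCLike.ofReal_eq_complex_ofReal]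
  norm_cast

variable [MeasurableSpace (Matrix.unitaryGroup n ℂ)] [BorelSpace (Matrix.unitaryGroup n ℂ)]
  (μ : Measure (Matrix.unitaryGroup n ℂ))

theorem integral_comp_conjStarAlgAut [μ.IsMulLeftInvariant] (τ : Matrix n n ℂ)
    (F : Matrix n n ℂ → ℝ) (Z : Matrix.unitaryGroup n ℂ) :
    ∫ U, F (Ad Z (Ad U τ)) ∂μ = ∫ U, F (Ad U τ) ∂μ := by
  simpa only [Unitary.conjStarAlgAut_mul_apply] using
    integral_mul_left_eq_self (fun U : Matrix.unitaryGroup n ℂ => F (Ad U τ)) Z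

theorem integral_comp_conjStarAlgAut_submatrix [μ.IsMulLeftInvariant] (τ : Matrix n n ℂ)
    (F : Matrix n n ℂ → ℝ) (σ : Equiv.Perm n) :
    ∫ U, F ((Ad U τ).submatrix σ σ) ∂μ = ∫ U, F (Ad U τ) ∂μ := by
  simp_rw [← conjStarAlgAut_permMatrix]
  exact integral_comp_conjStarAlgAut μ τ F _

theorem integral_comp_quadraticForm_conjStarAlgAut [μ.IsMulLeftInvariant] (τ : Matrix n n ℂ)
    (f : ℂ → ℝ) {x : n → ℂ} (hx : ∑ i, ‖x i‖ ^ 2 = 1) (k : n) :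
    ∫ U, f (star x ⬝ᵥ (Ad U τ).mulVec x) ∂μ = ∫ U, f (Ad U τ k k) ∂μ := by
  obtain ⟨Z, rfl⟩ := exists_unitaryGroup_col_eq x hx k
  rw [← integral_comp_conjStarAlgAut μ τ (fun X => f (X k k)) (star Z)]
  congr! 2 with U
  generalize Ad U τ = X
  rw [Unitary.conjStarAlgAut_star_apply, Matrix.mul_assoc]
  simp only [Matrix.mul_apply, dotProduct, Matrix.mulVec, Matrix.star_apply,
    Pi.star_apply, Matrix.col_apply]

theorem integral_comp_diag_conj_eq [μ.IsMulLeftInvariant] (τ : Matrix n n ℂ) (f : ℂ → ℝ) (k l : n) :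
    ∫ U, f (Ad U τ k k) ∂μ = ∫ U, f (Ad U τ l l) ∂μ := by
  simpa using integral_comp_conjStarAlgAut_submatrix μ τ (fun X => f (X l l)) (Equiv.swap k l)

theorem integral_comp_entries_conj_eq [μ.IsMulLeftInvariant] (τ : Matrix n n ℂ) (f : ℂ → ℂ → ℂ → ℝ)
    {k l p q : n} (hkl : k ≠ l) (hpq : p ≠ q) :
    ∫ U, f (Ad U τ k k) (Ad U τ l l) (Ad U τ k l) ∂μ =
      ∫ U, f (Ad U τ p p) (Ad U τ q q) (Ad U τ p q) ∂μ := by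
  obtain ⟨σ, rfl, rfl⟩ := MulAction.is_two_pretransitive_iff.mp
    (Equiv.Perm.isMultiplyPretransitive n 2) hpq hkl
  exact integral_comp_conjStarAlgAut_submatrix μ τ (fun X => f (X p p) (X q q) (X p q)) σ

theorem sum_integral_mul_re_diag_conj [IsFiniteMeasure μ] (τ : Matrix n n ℂ)
    {f : Matrix.unitaryGroup n ℂ → ℝ} (hf : Continuous f) :
    ∑ l, ∫ U, f U * (Ad U τ l l).re ∂μ = τ.trace.re * ∫ U, f U ∂μ := by
  rw [← integral_finsetSum _ fun l _ => integrable_of_continuous μ (by fun_prop),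
    ← integral_const_mul]
  refine integral_congr_ae (.of_forall fun U => ?_)
  dsimp only
  rw [← Finset.mul_sum, ← Complex.re_sum, mul_comm, ← trace_conjStarAlgAut U τ]
  rfl

theorem integral_re_diag_conj [μ.IsMulLeftInvariant] [IsProbabilityMeasure μ] (τ : Matrix n n ℂ)
    (k : n) : ∫ U, (Ad U τ k k).re ∂μ = τ.trace.re / Fintype.card n := by
  have : Nonempty n := ⟨k⟩
  have hsum := sum_integral_mul_re_diag_conj μ τ (f := 1) continuous_one
  simp only [Pi.one_apply, one_mul, integral_const, probReal_univ, smul_eq_mul, mul_one,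
    fun l => integral_comp_diag_conj_eq μ τ Complex.re l k, Finset.sum_const, Finset.card_univ,
    nsmul_eq_mul] at hsum
  rw [← hsum]
  field_simp

theorem integral_sq_re_diag_conj_eq_add [μ.IsMulLeftInvariant] [IsFiniteMeasure μ]
    {τ : Matrix n n ℂ} (hτ : τ.IsHermitian) {k l : n} (hkl : k ≠ l) :
    ∫ U, (Ad U τ k k).re ^ 2 ∂μ =
      ∫ U, (Ad U τ k k).re * (Ad U τ l l).re ∂μ + ∫ U, ‖Ad U τ k l‖ ^ 2 ∂μ := by
  have hrot (w : ℂ) (hw : ‖w‖ = 1) : ∫ U, (((Ad U τ k k).re + (Ad U τ l l).re) / 2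
      + (w * Ad U τ k l).re) ^ 2 ∂μ = ∫ U, (Ad U τ k k).re ^ 2 ∂μ := by
    obtain ⟨x, hx, hform⟩ := exists_unit_vector_re_quadraticForm_eq hkl hw
    simp_rw [← hform _ (isHermitian_conjStarAlgAut hτ _)]
    exact integral_comp_quadraticForm_conjStarAlgAut μ τ (fun z => z.re ^ 2) hx k
  -- averaging over the phases removes the terms linear in `z` and those in `z ^ 2`
  have hphases (a b : ℝ) (z : ℂ) :
      ((a + b) / 2 + (1 * z).re) ^ 2 + ((a + b) / 2 + (-1 * z).re) ^ 2 +
      ((a + b) / 2 + (Complex.I * z).re) ^ 2 + ((a + b) / 2 + (-Complex.I * z).re) ^ 2 =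
      a ^ 2 + b ^ 2 + 2 * (a * b) + 2 * ‖z‖ ^ 2 := by
    rw [← Complex.normSq_eq_norm_sq, Complex.normSq_apply]
    simp only [one_mul, neg_mul, Complex.neg_re, Complex.mul_re, Complex.I_re, Complex.I_im,
      zero_mul, zero_sub, neg_neg]
    ring
  have hI {f : Matrix.unitaryGroup n ℂ → ℝ} (hf : Continuous f) : Integrable f μ :=
    integrable_of_continuous μ hf
  have hsum := congrArg (fun f => ∫ U, f U ∂μ)
    (funext fun U => hphases (Ad U τ k k).re (Ad U τ l l).re (Ad U τ k l))
  dsimp only at hsum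
  rw [integral_add (hI (by fun_prop)) (hI (by fun_prop)),
    integral_add (hI (by fun_prop)) (hI (by fun_prop)),
    integral_add (hI (by fun_prop)) (hI (by fun_prop)),
    integral_add (hI (by fun_prop)) (hI (by fun_prop)),
    integral_add (hI (by fun_prop)) (hI (by fun_prop)),
    integral_add (hI (by fun_prop)) (hI (by fun_prop)),
    integral_const_mul, integral_const_mul,
    hrot _ (by simp), hrot _ (by simp), hrot _ (by simp), hrot _ (by simp),
    integral_comp_diag_conj_eq μ τ (fun z => z.re ^ 2) l k] at hsum
  linarith

theorem integral_re_diag_mul_re_diag_conj_le [μ.IsMulLeftInvariant] [IsProbabilityMeasure μ]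
    (τ : Matrix n n ℂ) {k l : n} (hkl : k ≠ l) :
    ∫ U, (Ad U τ k k).re * (Ad U τ l l).re ∂μ ≤ (τ.trace.re / Fintype.card n) ^ 2 := by
  have hcont : Continuous fun U : Matrix.unitaryGroup n ℂ => (Ad U τ k k).re := by fun_prop
  have hrow := sum_integral_mul_re_diag_conj μ τ hcont
  rw [← Finset.add_sum_erase _ _ (Finset.mem_univ k), Finset.sum_congr rfl fun m hm =>
    integral_comp_entries_conj_eq μ τ (fun a b _ => a.re * b.re)
      (Finset.ne_of_mem_erase hm).symm hkl,
    Finset.sum_const, Finset.card_erase_of_mem (Finset.mem_univ k), nsmul_eq_mul, Finset.card_univ,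
    Nat.cast_pred (Fintype.card_pos_iff.mpr ⟨k⟩), integral_re_diag_conj] at hrow
  have hvar := sq_integral_le_integral_sq μ
    ((memLp_two_iff_integrable_sq hcont.aestronglyMeasurable).mpr
      (integrable_of_continuous μ (hcont.pow 2)))
  rw [integral_re_diag_conj] at hvar
  have : Nontrivial n := ⟨k, l, hkl⟩
  have hcard : (1 : ℝ) < Fintype.card n := by exact_mod_cast Fintype.one_lt_card
  simp_rw [← sq] at hrow
  set c := ∫ U, (Ad U τ k k).re * (Ad U τ l l).re ∂μ
  set N : ℝ := (Fintype.card n : ℝ)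
  have hT : τ.trace.re * (τ.trace.re / N) = N * (τ.trace.re / N) ^ 2 := by field_simp
  refine le_of_mul_le_mul_left ?_ (sub_pos.mpr hcard)
  linarith

theorem integral_sum_mul_norm_sq_conj_le [μ.IsMulLeftInvariant] [IsProbabilityMeasure μ]
    {τ : Matrix n n ℂ} (hτ : τ.IsHermitian) {w : n → ℝ} (hw : ∑ k, w k = 0) :
    ∫ U, ∑ k, ∑ l, w k * w l * ‖Ad U τ k l‖ ^ 2 ∂μ ≤
      (∑ k, w k ^ 2) * (τ.trace.re / Fintype.card n) ^ 2 := by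
  obtain hn | ⟨p, q, hpq⟩ := subsingleton_or_nontrivial n
  · have hw_zero (k : n) : w k = 0 := by rwa [Fintype.sum_subsingleton _ k] at hw
    simp [hw_zero]
  set a := ∫ U, ‖Ad U τ p q‖ ^ 2 ∂μ with ha
  set c := ∫ U, (Ad U τ p p).re * (Ad U τ q q).re ∂μ
  have hmoment (k l : n) : ∫ U, ‖Ad U τ k l‖ ^ 2 ∂μ = a + if k = l then c else 0 := by
    split_ifs with hkl
    · subst hkl
      have hreal (U : Matrix.unitaryGroup n ℂ) : ‖Ad U τ k k‖ ^ 2 = (Ad U τ k k).re ^ 2 := by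
        rw [← (isHermitian_conjStarAlgAut hτ U).coe_re_apply_self k]
        simp [-Unitary.conjStarAlgAut_apply]
      simp_rw [hreal]
      rw [integral_comp_diag_conj_eq μ τ (fun z => z.re ^ 2) k p,
        integral_sq_re_diag_conj_eq_add μ hτ hpq, add_comm]
    · rw [add_zero, ha, integral_comp_entries_conj_eq μ τ (fun _ _ z => ‖z‖ ^ 2) hkl hpq]
  calc ∫ U, ∑ k, ∑ l, w k * w l * ‖Ad U τ k l‖ ^ 2 ∂μ
      = ∑ k, ∑ l, w k * w l * ∫ U, ‖Ad U τ k l‖ ^ 2 ∂μ := by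
        simp_rw [← integral_const_mul]
        rw [integral_finsetSum _ fun k _ => integrable_of_continuous μ (by fun_prop)]
        exact Finset.sum_congr rfl fun k _ =>
          integral_finsetSum _ fun l _ => integrable_of_continuous μ (by fun_prop)
    _ = (∑ k, w k) ^ 2 * a + (∑ k, w k ^ 2) * c := by
        simp_rw [hmoment, mul_add, Finset.sum_add_distrib, mul_ite, mul_zero, Finset.sum_ite_eq,
          Finset.mem_univ, if_true, ← Finset.sum_mul, ← Finset.mul_sum]
        rw [← Finset.sum_mul, ← sq]
        simp_rw [← sq]
    _ ≤ (∑ k, w k ^ 2) * (τ.trace.re / Fintype.card n) ^ 2 := by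
        rw [hw, zero_pow two_ne_zero, zero_mul, zero_add]
        gcongr
        exact integral_re_diag_mul_re_diag_conj_le μ τ hpq

theorem integral_re_trace_mul_conj_sq_le [μ.IsMulLeftInvariant] [IsProbabilityMeasure μ]
    {M τ : Matrix n n ℂ} (hM : M.IsHermitian) (hM_trace : M.trace = 0) (hτ : τ.IsHermitian) :
    ∫ U, (Matrix.trace (M * Ad U τ * (M * Ad U τ))).re ∂μ ≤
      (M * M).trace.re * (τ.trace.re / Fintype.card n) ^ 2 := by
  set V := hM.eigenvectorUnitary
  set w := hM.eigenvalues
  set D : Matrix n n ℂ := Matrix.diagonal (RCLike.ofReal ∘ w)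
  have hspec : M = Ad V D := hM.spectral_theorem
  have hw : ∑ k, w k = 0 := by
    have h := congrArg Complex.re hM.trace_eq_sum_eigenvalues
    simpa only [hM_trace, Complex.zero_re, Complex.re_sum, RCLike.ofReal_eq_complex_ofReal,
      Complex.ofReal_re] using h.symm
  have hMM : (M * M).trace.re = ∑ k, w k ^ 2 := by
    rw [hspec, ← map_mul, trace_conjStarAlgAut, Matrix.diagonal_mul_diagonal,
      Matrix.trace_diagonal, Complex.re_sum]
    refine Finset.sum_congr rfl fun k _ => ?_
    simp only [Function.comp_apply, RCLike.ofReal_eq_complex_ofReal, sq]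
    norm_cast
  have hdiag (X : Matrix n n ℂ) :
      Matrix.trace (M * Ad V X * (M * Ad V X)) = Matrix.trace (D * X * (D * X)) := by
    rw [hspec]
    simp only [← map_mul]
    exact trace_conjStarAlgAut V _
  rw [← integral_comp_conjStarAlgAut μ τ (fun X => (Matrix.trace (M * X * (M * X))).re) V, hMM]
  simp_rw [hdiag]
  dsimp only [D]
  simp_rw [fun U => re_trace_diagonal_mul_mul_diagonal_mul w (isHermitian_conjStarAlgAut hτ U)]
  exact integral_sum_mul_norm_sq_conj_le μ hτ hw

end HaarConjugation

section Frobenius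

theorem conjTranspose_mul_self_mul_of_isometry {a b c : Type*} [Fintype a] [Fintype b]
    [DecidableEq b] {V : Matrix a b ℂ} (hV : V.conjTranspose * V = 1) (Y : Matrix b c ℂ) :
    (V * Y).conjTranspose * (V * Y) = Y.conjTranspose * Y := by
  rw [Matrix.conjTranspose_mul, Matrix.mul_assoc, ← Matrix.mul_assoc V.conjTranspose, hV,
    Matrix.one_mul]

theorem re_trace_conjTranspose_mul_self {a b : Type*} [Fintype a] [Fintype b]
    (Y : Matrix a b ℂ) : (Y.conjTranspose * Y).trace.re = ∑ k, ∑ i, ‖Y k i‖ ^ 2 := by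
  simp only [Matrix.trace, Matrix.diag_apply, Matrix.mul_apply, Matrix.conjTranspose_apply,
    RCLike.star_def, Complex.conj_mul', Complex.re_sum]
  rw [Finset.sum_comm]
  norm_cast

variable {m : Type*} [Fintype m]

theorem frobSq_nonneg (A : Matrix m m ℂ) : 0 ≤ frobSq A :=
  Finset.sum_nonneg fun _ _ => Finset.sum_nonneg fun _ _ => sq_nonneg _

theorem frobSq_transpose (A : Matrix m m ℂ) : frobSq A.transpose = frobSq A :=
  Finset.sum_comm

@[fun_prop]
theorem continuous_frobSq : Continuous (frobSq : Matrix m m ℂ → ℝ) := by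
  unfold frobSq
  fun_prop

theorem frobSq_sub_le (A B : Matrix m m ℂ) : frobSq (A - B) ≤ 2 * frobSq A + 2 * frobSq B := by
  simp only [frobSq, Finset.mul_sum, ← Finset.sum_add_distrib]
  refine Finset.sum_le_sum fun i _ => Finset.sum_le_sum fun j _ => ?_
  rw [Matrix.sub_apply]
  calc ‖A i j - B i j‖ ^ 2 ≤ (‖A i j‖ + ‖B i j‖) ^ 2 := by gcongr; exact norm_sub_le _ _
    _ ≤ 2 * (‖A i j‖ ^ 2 + ‖B i j‖ ^ 2) := add_sq_le
    _ = 2 * ‖A i j‖ ^ 2 + 2 * ‖B i j‖ ^ 2 := mul_add ..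

theorem frobSq_conjTranspose_mul_mul {n : Type*} [Fintype n] {M : Matrix n n ℂ}
    (hM : M.IsHermitian) (B : Matrix n m ℂ) :
    frobSq (B.conjTranspose * M * B) =
      (Matrix.trace (M * (B * B.conjTranspose) * (M * (B * B.conjTranspose)))).re := by
  rw [frobSq, ← re_trace_conjTranspose_mul_self,
    (Matrix.isHermitian_conjTranspose_mul_mul B hM).eq, Matrix.mul_assoc, Matrix.mul_assoc,
    Matrix.trace_mul_comm]
  simp only [Matrix.mul_assoc]

theorem integral_frobSq_conjTranspose_mul_mul_le {n : Type*} [Fintype n] [DecidableEq n]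
    [MeasurableSpace (Matrix.unitaryGroup n ℂ)] [BorelSpace (Matrix.unitaryGroup n ℂ)]
    (μ : Measure (Matrix.unitaryGroup n ℂ)) [μ.IsMulLeftInvariant] [IsProbabilityMeasure μ]
    {M : Matrix n n ℂ} (hM : M.IsHermitian) (hM_trace : M.trace = 0) (B : Matrix n m ℂ) :
    ∫ U : Matrix.unitaryGroup n ℂ,
        frobSq (((U : Matrix n n ℂ) * B).conjTranspose * M * ((U : Matrix n n ℂ) * B)) ∂μ ≤
      (M * M).trace.re * ((B.conjTranspose * B).trace.re / Fintype.card n) ^ 2 := by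
  have hconj (U : Matrix.unitaryGroup n ℂ) :
      (U : Matrix n n ℂ) * B * ((U : Matrix n n ℂ) * B).conjTranspose =
        Unitary.conjStarAlgAut ℂ (Matrix n n ℂ) U (B * B.conjTranspose) := by
    rw [Unitary.conjStarAlgAut_apply, Matrix.conjTranspose_mul, Matrix.star_eq_conjTranspose]
    simp only [Matrix.mul_assoc]
  simp_rw [frobSq_conjTranspose_mul_mul hM, hconj, Matrix.trace_mul_comm B.conjTranspose B]
  exact integral_re_trace_mul_conj_sq_le μ hM hM_trace (Matrix.isHermitian_mul_conjTranspose_self B)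

end Frobenius

section Measurement

variable {α β γ δ : Type*}

theorem sum_conj_mul_self_eq_one [Fintype γ] {v : γ → ℂ} (hv : ∑ i, ‖v i‖ ^ 2 = 1) :
    ∑ i, (starRingEnd ℂ) (v i) * v i = 1 := by
  simp_rw [Complex.conj_mul']
  exact_mod_cast hv

/-- The isometry `v ↦ v ⊗ ψf`, its codomain being identified with `ℂⁿ` along `e`. -/
noncomputable def ancillaIsometry [DecidableEq α] {n : Type*} (e : α × β ≃ n) (ψf : β → ℂ) :
    Matrix n α ℂ :=
  Matrix.of fun y r => if (e.symm y).1 = r then ψf (e.symm y).2 else 0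

theorem ancillaIsometry_conjTranspose_mul_self [DecidableEq α] [Finite α] [Fintype β]
    {n : Type*} [Fintype n] (e : α × β ≃ n) {ψf : β → ℂ} (hψf : ∑ i, ‖ψf i‖ ^ 2 = 1) :
    (ancillaIsometry e ψf).conjTranspose * ancillaIsometry e ψf = 1 := by
  have := Fintype.ofFinite α
  ext r s
  rw [Matrix.mul_apply, ← e.sum_comp, Fintype.sum_prod_type]
  obtain rfl | hrs := eq_or_ne r s
  · simp [ancillaIsometry, apply_ite, ite_mul, sum_conj_mul_self_eq_one hψf]
  · simp [ancillaIsometry, hrs, hrs.symm]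

/-- The partial inner product `⟨v| ⊗ I` with a vector `v` of the left tensor factor. -/
noncomputable def braKronecker (δ : Type*) [DecidableEq δ] (v : γ → ℂ) : Matrix δ (γ × δ) ℂ :=
  Matrix.of fun k y => (starRingEnd ℂ) (v y.1) * (1 : Matrix δ δ ℂ) k y.2

theorem braKronecker_conjTranspose_mul_self [Fintype δ] [DecidableEq δ] (v : γ → ℂ) :
    (braKronecker δ v).conjTranspose * braKronecker δ v = outer v ⊗ₖ (1 : Matrix δ δ ℂ) := by
  ext x y
  by_cases hxy : x.2 = y.2 <;>
    simp [Matrix.mul_apply, braKronecker, outer, Matrix.one_apply, hxy, eq_comm]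

/-- The trace-zero part `d • |v⟩⟨v| ⊗ I - I` of the projective measurement of a unit vector `v` of
the `d`-dimensional left tensor factor, rescaled by `d` to undo the mean probability `1 / d` of the
outcome. -/
noncomputable def centredMeasurement (δ : Type*) [Fintype γ] [DecidableEq γ] [DecidableEq δ]
    (v : γ → ℂ) : Matrix (γ × δ) (γ × δ) ℂ :=
  (Fintype.card γ : ℂ) • outer v ⊗ₖ (1 : Matrix δ δ ℂ) - 1

theorem isHermitian_outer (v : γ → ℂ) : (outer v).IsHermitian :=
  Matrix.IsHermitian.ext fun i j => by simp [outer, mul_comm]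

variable [Fintype γ] {v : γ → ℂ}

theorem trace_outer (hv : ∑ i, ‖v i‖ ^ 2 = 1) : (outer v).trace = 1 := by
  simpa only [Matrix.trace, Matrix.diag_apply, outer, mul_comm] using sum_conj_mul_self_eq_one hv

theorem outer_mul_self (hv : ∑ i, ‖v i‖ ^ 2 = 1) : outer v * outer v = outer v := by
  ext i j
  simp_rw [Matrix.mul_apply, outer, mul_assoc, ← Finset.mul_sum, ← mul_assoc, ← Finset.sum_mul,
    sum_conj_mul_self_eq_one hv, one_mul]

variable [DecidableEq γ] [DecidableEq δ]

theorem isHermitian_centredMeasurement (v : γ → ℂ) : (centredMeasurement δ v).IsHermitian := by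
  unfold centredMeasurement
  refine .sub ?_ Matrix.isHermitian_one
  rw [Matrix.IsHermitian, Matrix.conjTranspose_smul, Matrix.conjTranspose_kronecker,
    (isHermitian_outer v).eq, Matrix.conjTranspose_one, star_natCast]

variable [Fintype δ]

theorem trace_centredMeasurement (hv : ∑ i, ‖v i‖ ^ 2 = 1) :
    (centredMeasurement δ v).trace = 0 := by
  rw [centredMeasurement, Matrix.trace_sub, Matrix.trace_smul, Matrix.trace_kronecker,
    trace_outer hv, Matrix.trace_one, Matrix.trace_one, Fintype.card_prod, one_mul, smul_eq_mul,
    Nat.cast_mul, sub_self]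

theorem centredMeasurement_mul_self (hv : ∑ i, ‖v i‖ ^ 2 = 1) :
    centredMeasurement δ v * centredMeasurement δ v =
      ((Fintype.card γ : ℂ) - 2) • centredMeasurement δ v + ((Fintype.card γ : ℂ) - 1) • 1 := by
  have hproj : outer v ⊗ₖ (1 : Matrix δ δ ℂ) * outer v ⊗ₖ (1 : Matrix δ δ ℂ) = outer v ⊗ₖ 1 := by
    rw [← Matrix.mul_kronecker_mul, outer_mul_self hv, Matrix.one_mul]
  simp only [centredMeasurement, sub_mul, mul_sub, smul_mul_smul_comm, hproj, one_mul, mul_one]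
  module

theorem re_trace_centredMeasurement_mul_self (hv : ∑ i, ‖v i‖ ^ 2 = 1) :
    (centredMeasurement δ v * centredMeasurement δ v).trace.re =
      (Fintype.card γ - 1) * (Fintype.card γ * Fintype.card δ) := by
  rw [centredMeasurement_mul_self hv, Matrix.trace_add, Matrix.trace_smul,
    trace_centredMeasurement hv, smul_zero, zero_add, Matrix.trace_smul, Matrix.trace_one,
    Fintype.card_prod, smul_eq_mul]
  norm_cast

end Measurement

section Decoupling

variable {dR df dP dB : ℕ} (e : Fin dR × Fin df ≃ Fin dP × Fin dB)

theorem Vtilde_eq_smul_mul (ψf : Fin df → ℂ) (eP : Fin dP → ℂ)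
    (U : Matrix (Fin dP × Fin dB) (Fin dP × Fin dB) ℂ) :
    Vtilde dR df dP dB e ψf eP U =
      (Real.sqrt dP : ℂ) • (braKronecker (Fin dB) eP * (U * ancillaIsometry e ψf)) := by
  ext k r
  rw [Matrix.smul_apply, Matrix.mul_apply, Fintype.sum_prod_type]
  simp [Vtilde, braKronecker, ancillaIsometry, Matrix.one_apply, Matrix.mul_apply]

theorem Vtilde_mul_conjTranspose_mul_self (ψf : Fin df → ℂ) (eP : Fin dP → ℂ)
    (U : Matrix (Fin dP × Fin dB) (Fin dP × Fin dB) ℂ) {m : Type*} (Y : Matrix (Fin dR) m ℂ) :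
    (Vtilde dR df dP dB e ψf eP U * Y).conjTranspose * (Vtilde dR df dP dB e ψf eP U * Y) =
      (U * (ancillaIsometry e ψf * Y)).conjTranspose * (centredMeasurement (Fin dB) eP + 1) *
        (U * (ancillaIsometry e ψf * Y)) := by
  have hsqrt : star (Real.sqrt dP : ℂ) * (Real.sqrt dP : ℂ) = dP := by
    rw [RCLike.star_def, Complex.conj_ofReal, ← Complex.ofReal_mul,
      Real.mul_self_sqrt (Nat.cast_nonneg _), Complex.ofReal_natCast]
  have hmeasure : centredMeasurement (Fin dB) eP + 1 =
      (dP : ℂ) • ((braKronecker (Fin dB) eP).conjTranspose * braKronecker (Fin dB) eP) := by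
    rw [braKronecker_conjTranspose_mul_self, centredMeasurement, sub_add_cancel, Fintype.card_fin]
  rw [Vtilde_eq_smul_mul, hmeasure, ← hsqrt]
  simp only [Matrix.conjTranspose_smul, Matrix.conjTranspose_mul, Matrix.smul_mul, Matrix.mul_smul,
    smul_smul, Matrix.mul_assoc, mul_comm]

variable {α κ : Type*}

/-- The coefficients of a bipartite vector as a matrix, so that `V ⊗ I` acts on them as left
multiplication by `V`. -/
def stateMatrix (ψ : α × κ → ℂ) : Matrix α κ ℂ :=
  Matrix.of (Function.curry ψ)

variable [Fintype α]

theorem ptraceLeft_outer (ψ : α × κ → ℂ) :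
    ptraceLeft (outer ψ) = ((stateMatrix ψ).conjTranspose * stateMatrix ψ).transpose := by
  ext i j
  simp only [ptraceLeft, outer, Matrix.transpose_apply, Matrix.mul_apply,
    Matrix.conjTranspose_apply, RCLike.star_def, stateMatrix, Matrix.of_apply, Function.curry,
    mul_comm]

variable [DecidableEq κ] [Fintype κ]

/-- The reduced state `Tr_β[(V ⊗ I) ψψ† (V† ⊗ I)]` on a reference system `κ`, after the left factor
of `ψ` has been sent through `V`. -/
noncomputable def referenceState {β : Type*} [Fintype β] (V : Matrix β α ℂ) (ψ : α × κ → ℂ) :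
    Matrix κ κ ℂ :=
  ptraceLeft (outer ((V ⊗ₖ (1 : Matrix κ κ ℂ)).mulVec ψ))

theorem stateMatrix_kronecker_one_mulVec {β : Type*} (V : Matrix β α ℂ) (ψ : α × κ → ℂ) :
    stateMatrix ((V ⊗ₖ (1 : Matrix κ κ ℂ)).mulVec ψ) = V * stateMatrix ψ := by
  ext k s
  simp [stateMatrix, Matrix.mulVec, dotProduct, Matrix.mul_apply, Fintype.sum_prod_type,
    Matrix.one_apply]

variable [DecidableEq α]

theorem referenceState_Vtilde_mul_sub {ψf : Fin df → ℂ} (hψf : ∑ i, ‖ψf i‖ ^ 2 = 1)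
    (eP : Fin dP → ℂ) (U : Matrix.unitaryGroup (Fin dP × Fin dB) ℂ) {W : Matrix (Fin dR) α ℂ}
    (hW : W.conjTranspose * W = 1) (ψ : α × κ → ℂ) :
    referenceState (Vtilde dR df dP dB e ψf eP U * W) ψ - ptraceLeft (outer ψ) =
      ((U.1 * (ancillaIsometry e ψf * (W * stateMatrix ψ))).conjTranspose *
        centredMeasurement (Fin dB) eP *
        (U.1 * (ancillaIsometry e ψf * (W * stateMatrix ψ)))).transpose := by
  set Y : Matrix (Fin dR) κ ℂ := W * stateMatrix ψ with hY
  have hisometry : (U.1 * (ancillaIsometry e ψf * Y)).conjTranspose *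
      (U.1 * (ancillaIsometry e ψf * Y)) = Y.conjTranspose * Y := by
    rw [conjTranspose_mul_self_mul_of_isometry (Matrix.mem_unitaryGroup_iff'.mp U.2),
      conjTranspose_mul_self_mul_of_isometry (ancillaIsometry_conjTranspose_mul_self e hψf)]
  rw [referenceState, ptraceLeft_outer, ptraceLeft_outer, stateMatrix_kronecker_one_mulVec,
    Matrix.mul_assoc, ← hY, Vtilde_mul_conjTranspose_mul_self,
    ← conjTranspose_mul_self_mul_of_isometry hW, ← hY, ← hisometry, ← Matrix.transpose_sub,
    Matrix.mul_add, Matrix.add_mul, Matrix.mul_one, add_sub_cancel_right]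

variable [MeasurableSpace (Matrix.unitaryGroup (Fin dP × Fin dB) ℂ)]
  [BorelSpace (Matrix.unitaryGroup (Fin dP × Fin dB) ℂ)]
  (μ : Measure (Matrix.unitaryGroup (Fin dP × Fin dB) ℂ))

theorem integral_frobSq_referenceState_sub_le [μ.IsMulLeftInvariant] [IsProbabilityMeasure μ]
    {ψf : Fin df → ℂ} (hψf : ∑ i, ‖ψf i‖ ^ 2 = 1) {eP : Fin dP → ℂ} (heP : ∑ i, ‖eP i‖ ^ 2 = 1)
    {W : Matrix (Fin dR) α ℂ} (hW : W.conjTranspose * W = 1) {ψ : α × κ → ℂ}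
    (hψ : ∑ i, ‖ψ i‖ ^ 2 = 1) :
    ∫ U : Matrix.unitaryGroup (Fin dP × Fin dB) ℂ,
        frobSq (referenceState (Vtilde dR df dP dB e ψf eP U * W) ψ - ptraceLeft (outer ψ)) ∂μ ≤
      1 / dB := by
  have htrace : ((ancillaIsometry e ψf * (W * stateMatrix ψ)).conjTranspose *
      (ancillaIsometry e ψf * (W * stateMatrix ψ))).trace.re = 1 := by
    rw [conjTranspose_mul_self_mul_of_isometry (ancillaIsometry_conjTranspose_mul_self e hψf),
      conjTranspose_mul_self_mul_of_isometry hW, re_trace_conjTranspose_mul_self, ← hψ,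
      Fintype.sum_prod_type]
    rfl
  simp_rw [referenceState_Vtilde_mul_sub e hψf eP _ hW, frobSq_transpose]
  refine (integral_frobSq_conjTranspose_mul_mul_le μ (isHermitian_centredMeasurement eP)
    (trace_centredMeasurement heP) _).trans ?_
  rw [htrace, re_trace_centredMeasurement_mul_self heP, Fintype.card_prod, Fintype.card_fin,
    Fintype.card_fin, Nat.cast_mul]
  obtain hB | hB := eq_or_ne (dB : ℝ) 0
  · simp [hB]
  obtain hP | hP := eq_or_ne (dP : ℝ) 0
  · simp [hP]
  calc ((dP : ℝ) - 1) * (dP * dB) * (1 / (dP * dB)) ^ 2 = (1 - 1 / dP) * (1 / dB) := by field_simp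
    _ ≤ 1 * (1 / dB) := by gcongr; exact sub_le_self _ (by positivity)
    _ = 1 / dB := one_mul _

theorem integrable_frobSq_referenceState_sub [IsFiniteMeasure μ] {ψf : Fin df → ℂ}
    (hψf : ∑ i, ‖ψf i‖ ^ 2 = 1) (eP : Fin dP → ℂ) {W : Matrix (Fin dR) α ℂ}
    (hW : W.conjTranspose * W = 1) (ψ : α × κ → ℂ) :
    Integrable (fun U : Matrix.unitaryGroup (Fin dP × Fin dB) ℂ =>
      frobSq (referenceState (Vtilde dR df dP dB e ψf eP U * W) ψ - ptraceLeft (outer ψ))) μ := by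
  simp_rw [referenceState_Vtilde_mul_sub e hψf eP _ hW]
  exact integrable_of_continuous μ (by fun_prop)

theorem haar_decoupling_bound_B_general [μ.IsMulLeftInvariant] [IsProbabilityMeasure μ]
    {ψf : Fin df → ℂ} (hψf : ∑ i, ‖ψf i‖ ^ 2 = 1) {eP : Fin dP → ℂ} (heP : ∑ i, ‖eP i‖ ^ 2 = 1)
    {ψ : α × κ → ℂ} (hψ : ∑ i, ‖ψ i‖ ^ 2 = 1) {W₁ W₂ : Matrix (Fin dR) α ℂ}
    (hW₁ : W₁.conjTranspose * W₁ = 1) (hW₂ : W₂.conjTranspose * W₂ = 1) :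
    ∫ U : Matrix.unitaryGroup (Fin dP × Fin dB) ℂ,
        frobSq (referenceState (Vtilde dR df dP dB e ψf eP U * W₁) ψ -
          referenceState (Vtilde dR df dP dB e ψf eP U * W₂) ψ) ∂μ ≤ 4 / dB := by
  let err (W : Matrix (Fin dR) α ℂ) (U : Matrix.unitaryGroup (Fin dP × Fin dB) ℂ) : ℝ :=
    frobSq (referenceState (Vtilde dR df dP dB e ψf eP U * W) ψ - ptraceLeft (outer ψ))
  have herr_int {W : Matrix (Fin dR) α ℂ} (hW : W.conjTranspose * W = 1) :
      Integrable (fun U => 2 * err W U) μ :=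
    (integrable_frobSq_referenceState_sub e μ hψf eP hW ψ).const_mul 2
  have herr_le {W : Matrix (Fin dR) α ℂ} (hW : W.conjTranspose * W = 1) :
      ∫ U, err W U ∂μ ≤ 1 / dB :=
    integral_frobSq_referenceState_sub_le e μ hψf heP hW hψ
  calc _ ≤ ∫ U, (2 * err W₁ U + 2 * err W₂ U) ∂μ := by
        refine integral_mono_of_nonneg (.of_forall fun U => frobSq_nonneg _)
          ((herr_int hW₁).add (herr_int hW₂)) (.of_forall fun U => ?_)
        dsimp only
        rw [← sub_sub_sub_cancel_right _ _ (ptraceLeft (outer ψ))]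
        exact frobSq_sub_le _ _
    _ = 2 * ∫ U, err W₁ U ∂μ + 2 * ∫ U, err W₂ U ∂μ := by
        rw [integral_add (herr_int hW₁) (herr_int hW₂), integral_const_mul, integral_const_mul]
    _ ≤ 2 * (1 / dB) + 2 * (1 / dB) := by
        gcongr
        exacts [herr_le hW₁, herr_le hW₂]
    _ = 4 / dB := by ring

end Decoupling

/-- **Haar-averaged decoupling bound on the unmeasured boundary (equation (5.19)).**
For a Haar-random unitary `U : H_b ⊗ H_f → H_P ⊗ H_B` followed by a projective
measurement `⟨e_P|` on `H_P`, the average squared Frobenius norm of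
`Tr_B[Ṽ_U W_b ψψ† W_b† Ṽ_U†] − Tr_B[Ṽ_U ψψ† Ṽ_U†]` is at most `4/d_B`. -/
theorem haar_decoupling_bound_B
    (dR df dP dB : ℕ) (hdR : 0 < dR) (hdf : 0 < df) (hdP : 0 < dP) (hdB : 0 < dB)
    (hdim : dR * df = dP * dB)
    (e : Fin dR × Fin df ≃ Fin dP × Fin dB)
    (ψf : Fin df → ℂ) (hψf : ∑ i, ‖ψf i‖ ^ 2 = 1)
    (eP : Fin dP → ℂ) (heP : ∑ i, ‖eP i‖ ^ 2 = 1)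
    (ψ : Fin dR × Fin dR → ℂ) (hψ : ∑ i, ‖ψ i‖ ^ 2 = 1)
    (Wb : Matrix (Fin dR) (Fin dR) ℂ) (hWb : Wb ∈ Matrix.unitaryGroup (Fin dR) ℂ)
    [MeasurableSpace (Matrix.unitaryGroup (Fin dP × Fin dB) ℂ)]
    [BorelSpace (Matrix.unitaryGroup (Fin dP × Fin dB) ℂ)]
    (μ : Measure (Matrix.unitaryGroup (Fin dP × Fin dB) ℂ))
    [μ.IsHaarMeasure] [IsProbabilityMeasure μ] :
    (∫ U : Matrix.unitaryGroup (Fin dP × Fin dB) ℂ,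
      frobSq
        (ptraceLeft (outer
            ((((Vtilde dR df dP dB e ψf eP U * Wb) ⊗ₖ (1 : Matrix (Fin dR) (Fin dR) ℂ)).mulVec ψ)))
          - ptraceLeft (outer
            ((((Vtilde dR df dP dB e ψf eP U) ⊗ₖ (1 : Matrix (Fin dR) (Fin dR) ℂ)).mulVec ψ)))) ∂μ)
      ≤ 4 / dB := by
  simpa only [referenceState, Matrix.mul_one] using haar_decoupling_bound_B_general e μ hψf heP hψ
    (Matrix.mem_unitaryGroup_iff'.mp hWb) (Matrix.mem_unitaryGroup_iff'.mp (one_mem _))
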